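/- arXiv:1004.5418 — 2 statements merged into one kernel-verified Lean document; each statement's English description precedes it below -/
import Mathlib

section
/- Let W = {(x_1, y_1, a_1), …, (x_n, y_n, a_n)} and Z = {(x_i, y_i) : i ∈ A} with A = {i : a_i = 1}, m = #A. Suppose β̂_n = β̃_m(Z) where β̃_m is a regression estimate for samples of size m with finite sample breakdown point ε_1 > 0 at Z, and let ε_2 > 0 be the uniform asymptotic breakdown point of the location functional T_L. Then the finite sample breakdown point ε* of the location estimate μ̂_n = T_L(F̂_n) at W satisfies ε* ≥ ε_3 = min(ε_1, 1 − √(1 − ε_2)). (Theorem 4.) -/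
/-!
Fix `t, s` and put `κ = max (t/n) (s/m)`, so `κ < ε₁` and `1 - ε₂ < (1 - κ)²`.

Since `s/m < ε₁`, the regression estimate stays in a fixed closed ball, which is compact; as each
`g (x i) ·` is continuous and there are only finitely many `x i`, the values `g (x i) β̂*` are
bounded uniformly over the contaminated samples (`exists_bound_of_continuous`). Hence `ŷ*_{ij}` is
bounded by some `M` as soon as `j` is not replaced and `i ∈ A` is not replaced. There are at least
`(n - t)(m - s)` such pairs out of `n m`, so the empirical distribution of the `ŷ*_{ij}` gives
`[-M, M]` mass at least `(1 - t/n)(1 - s/m) ≥ (1 - κ)² > 1 - ε₂` (`le_mass_doubleEmpirical`), and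
the uniform asymptotic breakdown point of `T` applies.
-/

open MeasureTheory Filter Finset
open scoped ENNReal Topology

/-- The empirical distribution of the values `f j i` with `j : ι` and `i ∈ A`. The sizes `n` of `ι`
and `m` of `A` are passed separately, as casts of naturals, and enter only the normalization. -/
noncomputable def doubleEmpirical {ι : Type*} [Fintype ι] (n m : ℕ) (A : Finset ι)
    (f : ι → ι → ℝ) : Measure ℝ :=
  ((n : ℝ≥0∞) * (m : ℝ≥0∞))⁻¹ • ∑ j : ι, ∑ i ∈ A, Measure.dirac (f j i)

theorem isProbabilityMeasure_doubleEmpirical {n m : ℕ} (hn : 0 < n) (hm : 0 < m)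
    (A : Finset (Fin n)) (hA : m = A.card) (f : Fin n → Fin n → ℝ) :
    IsProbabilityMeasure (doubleEmpirical n m A f) := by
  constructor
  have h0 : (n : ℝ≥0∞) * (m : ℝ≥0∞) ≠ 0 := by
    simp [hn.ne', hm.ne']
  have h1 : (n : ℝ≥0∞) * (m : ℝ≥0∞) ≠ ⊤ :=
    ENNReal.mul_ne_top (ENNReal.natCast_ne_top n) (ENNReal.natCast_ne_top m)
  simp only [doubleEmpirical, Measure.smul_apply, Measure.finsetSum_apply, measure_univ,
    Finset.sum_const, smul_eq_mul, nsmul_eq_mul, mul_one, Finset.card_univ, Fintype.card_fin, ← hA]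
  exact ENNReal.inv_mul_cancel h0 h1

/-- If all points outside `t` rows and `s` columns lie in `B`, then `B` carries at least the
proportion `(1 - t/n)(1 - s/m)` of the mass. -/
theorem le_mass_doubleEmpirical {n m : ℕ} (hn : 0 < n) (hm : 0 < m)
    (A : Finset (Fin n)) (hA : m = A.card) (f : Fin n → Fin n → ℝ) {B : Set ℝ}
    (hB : MeasurableSet B) {t s : ℕ} (hs : s ≤ m) (S S' : Finset (Fin n))
    (hS : S.card ≤ t) (hS' : S'.card ≤ s)
    (hf : ∀ j, j ∉ S → ∀ i ∈ A, i ∉ S' → f j i ∈ B) :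
    (1 - (t : ℝ) / n) * (1 - (s : ℝ) / m) ≤ (doubleEmpirical n m A f B).toReal := by
  have hn' : (0 : ℝ) < n := by exact_mod_cast hn
  have hm' : (0 : ℝ) < m := by exact_mod_cast hm
  have hval : (doubleEmpirical n m A f B).toReal =
      ((n : ℝ) * m)⁻¹ * ∑ j : Fin n, ∑ i ∈ A, B.indicator 1 (f j i) := by
    simp only [doubleEmpirical, Measure.smul_apply, Measure.finsetSum_apply, smul_eq_mul,
      ENNReal.toReal_mul, ENNReal.toReal_inv, ENNReal.toReal_natCast]
    rw [ENNReal.toReal_sum (fun j _ => ENNReal.sum_ne_top.2 fun i _ => measure_ne_top _ _)]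
    congr 1
    refine Finset.sum_congr rfl fun j _ => ?_
    rw [ENNReal.toReal_sum (fun i _ => measure_ne_top _ _)]
    refine Finset.sum_congr rfl fun i _ => ?_
    by_cases h : f j i ∈ B <;> simp [Measure.dirac_apply' _ hB, h]
  have hnn : ∀ j i, (0 : ℝ) ≤ B.indicator 1 (f j i) := fun j i =>
    Set.indicator_nonneg (fun _ _ => zero_le_one) _
  have hsum : ((Sᶜ).card : ℝ) * ((A \ S').card : ℝ) ≤
      ∑ j : Fin n, ∑ i ∈ A, (B.indicator 1 (f j i) : ℝ) := by
    calc ((Sᶜ).card : ℝ) * ((A \ S').card : ℝ)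
        = ∑ j ∈ Sᶜ, ∑ i ∈ A \ S', (B.indicator 1 (f j i) : ℝ) := by
          rw [Finset.sum_congr rfl fun j hj => Finset.sum_congr rfl fun i hi => by
            rw [Set.indicator_of_mem (hf j (Finset.mem_compl.1 hj) i (Finset.mem_sdiff.1 hi).1
              (Finset.mem_sdiff.1 hi).2)]]
          simp
      _ ≤ ∑ j ∈ Sᶜ, ∑ i ∈ A, (B.indicator 1 (f j i) : ℝ) :=
          Finset.sum_le_sum fun j _ => Finset.sum_le_sum_of_subset_of_nonneg
            Finset.sdiff_subset fun i _ _ => hnn j i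
      _ ≤ _ := Finset.sum_le_sum_of_subset_of_nonneg (Finset.subset_univ _)
            fun j _ _ => Finset.sum_nonneg fun i _ => hnn j i
  have hc1 : (n : ℝ) - t ≤ (Sᶜ).card := by
    have h : n ≤ (Sᶜ).card + t := by
      have := Finset.card_add_card_compl S
      rw [Fintype.card_fin] at this
      omega
    have h2 : (n : ℝ) ≤ (Sᶜ).card + t := by exact_mod_cast h
    linarith
  have hc2 : (m : ℝ) - s ≤ (A \ S').card := by
    have h : m ≤ (A \ S').card + s := by
      have := Finset.le_card_sdiff S' A
      omega
    have h2 : (m : ℝ) ≤ (A \ S').card + s := by exact_mod_cast h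
    linarith
  have hs' : (0 : ℝ) ≤ (m : ℝ) - s := by
    have : (s : ℝ) ≤ m := by exact_mod_cast hs
    linarith
  have hprod : ((n : ℝ) - t) * ((m : ℝ) - s) ≤ ((Sᶜ).card : ℝ) * ((A \ S').card : ℝ) :=
    mul_le_mul hc1 hc2 hs' (Nat.cast_nonneg _)
  rw [hval]
  calc (1 - (t : ℝ) / n) * (1 - (s : ℝ) / m)
      = ((n : ℝ) * m)⁻¹ * (((n : ℝ) - t) * ((m : ℝ) - s)) := by field_simp
    _ ≤ _ := mul_le_mul_of_nonneg_left (hprod.trans hsum) (by positivity)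

/-- Finitely many continuous functions are uniformly bounded on a closed ball of `ℝ^q`. -/
theorem exists_bound_of_continuous {ι : Type*} [Finite ι] {q : ℕ}
    (h : ι → (Fin q → ℝ) → ℝ) (hc : ∀ i, Continuous (h i)) (K : ℝ) :
    ∃ C : ℝ, ∀ i β, ‖β‖ ≤ K → |h i β| ≤ C := by
  have h1 : ∀ i, ∃ C : ℝ, ∀ β, ‖β‖ ≤ K → |h i β| ≤ C := fun i => by
    obtain ⟨C, hC⟩ := (isCompact_closedBall (0 : Fin q → ℝ) K).exists_bound_of_continuousOn
      (hc i).continuousOn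
    exact ⟨C, fun β hβ => hC β (by simpa using hβ)⟩
  choose C hC using h1
  obtain ⟨D, hD⟩ := (Set.finite_range C).bddAbove
  exact ⟨D, fun i β hβ => (hC i β hβ).trans (hD ⟨i, rfl⟩)⟩

/-- **Theorem 4 (breakdown point).**  Let `W = {(x i, y i, a i) : i < n}` be a dataset with
missingness indicators `a i`, `A = {i : a i = true}`, `m = #A`.  The regression estimate is
`β̂_n = β̃(Z)` where `β̃` acts on datasets indexed by `A`, and the location estimate is
`μ̂_n(W*) = T_L(F̂*_n)`, with `F̂*_n` the empirical distribution of
`ŷ*_{ij} = g(x*_j, β̃(Z*)) + (y*_i − g(x*_i, β̃(Z*)))`, `j < n`, `i ∈ A`.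
Assume `ε₁ > 0` is (at most) the finite-sample breakdown point of `β̃` at
`Z = {(x i, y i) : i ∈ A}` — i.e. fewer than `ε₁ m` replacements keep `β̃` bounded —
and that `ε₂ > 0` is (at most) the uniform asymptotic breakdown point of `T_L`.
Then the finite-sample breakdown point of `μ̂_n` at `W` is at least
`ε₃ = min(ε₁, 1 − √(1 − ε₂))`: whenever `max(t/n, s/m) < ε₃`, the estimate `μ̂_n(W*)`
stays bounded over all contaminated samples `W* ∈ 𝒲_{t,s}` (at most `t` replacements in
total, at most `s` of them among the completely observed points; for `i ∉ A` only `x_i`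
can be replaced). -/
theorem theorem4_breakdown
    {p q : ℕ} (n : ℕ) (hn : 0 < n)
    (x : Fin n → (Fin p → ℝ)) (y : Fin n → ℝ) (a : Fin n → Bool)
    (A : Finset (Fin n)) (hA : A = Finset.univ.filter (fun i => a i = true))
    (m : ℕ) (hm : m = A.card) (hmpos : 0 < m)
    (g : (Fin p → ℝ) → (Fin q → ℝ) → ℝ)
    (hgcont : ∀ xv, Continuous (g xv))
    (βtilde : ({i : Fin n // i ∈ A} → (Fin p → ℝ) × ℝ) → (Fin q → ℝ))
    (T : Measure ℝ → ℝ)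
    (ε₁ ε₂ : ℝ) (hε₁pos : 0 < ε₁) (hε₂pos : 0 < ε₂) (hε₂le : ε₂ ≤ 1)
    -- ε₁ is (a lower bound for) the FSBP of β̃ at Z: fewer than ε₁·m replacements
    -- leave β̃ uniformly bounded
    (hFSBP : ∀ s : ℕ, (s : ℝ) / m < ε₁ → ∃ K : ℝ,
      ∀ Zstar : {i : Fin n // i ∈ A} → (Fin p → ℝ) × ℝ,
        (∃ S : Finset {i : Fin n // i ∈ A}, S.card ≤ s ∧
          ∀ i, i ∉ S → Zstar i = (x i.1, y i.1)) →
        ‖βtilde Zstar‖ ≤ K)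
    -- ε₂ is (a lower bound for) the UABP of T_L
    (hUABP : ∀ ε : ℝ, 0 < ε → ε < ε₂ → ∀ M > (0 : ℝ), ∃ K > (0 : ℝ),
      ∀ F : Measure ℝ, IsProbabilityMeasure F →
        1 - ε < (F {t : ℝ | |t| ≤ M}).toReal → |T F| < K) :
    ∀ t s : ℕ,
      max ((t : ℝ) / n) ((s : ℝ) / m) < min ε₁ (1 - Real.sqrt (1 - ε₂)) →
      ∃ K : ℝ, ∀ (xstar : Fin n → (Fin p → ℝ)) (ystar : Fin n → ℝ),
        -- W* ∈ 𝒲_{t,s}: at most t replaced points in total …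
        (∃ S : Finset (Fin n), S.card ≤ t ∧ ∀ i, i ∉ S →
          (i ∈ A → (xstar i, ystar i) = (x i, y i)) ∧
          (i ∉ A → xstar i = x i)) →
        -- … of which at most s among the non-missing observations
        (∃ S' : Finset (Fin n), S'.card ≤ s ∧ ∀ i ∈ A, i ∉ S' →
          (xstar i, ystar i) = (x i, y i)) →
        |T (((n : ℝ≥0∞) * (m : ℝ≥0∞))⁻¹ •
          ∑ j : Fin n, ∑ i ∈ A, Measure.dirac
            (g (xstar j) (βtilde (fun i' => (xstar i'.1, ystar i'.1))) +
              (ystar i - g (xstar i) (βtilde (fun i' => (xstar i'.1, ystar i'.1))))))|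
          ≤ K := by
  intro t s hts
  have hn' : (0 : ℝ) < n := by exact_mod_cast hn
  have hm' : (0 : ℝ) < m := by exact_mod_cast hmpos
  obtain ⟨hκ1, hκ2⟩ := lt_min_iff.1 hts
  set κ := max ((t : ℝ) / n) ((s : ℝ) / m) with hκ
  have htκ : (t : ℝ) / n ≤ κ := le_max_left _ _
  have hsκ : (s : ℝ) / m ≤ κ := le_max_right _ _
  have hκ0 : 0 ≤ κ := le_trans (by positivity) htκ
  have hsqrt := Real.sqrt_nonneg (1 - ε₂)
  have hκlt : κ < 1 := by linarith
  have hsq : 1 - ε₂ < (1 - κ) ^ 2 :=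
    (Real.sqrt_lt' (by linarith)).1 (by linarith)
  have hsm : s ≤ m := by
    have : (s : ℝ) < m := (div_lt_one hm').1 (hsκ.trans_lt hκlt)
    exact_mod_cast this.le
  obtain ⟨Kβ, hKβ⟩ := hFSBP s (hsκ.trans_lt hκ1)
  obtain ⟨C, hC⟩ := exists_bound_of_continuous (fun i => g (x i)) (fun i => hgcont (x i)) Kβ
  obtain ⟨Y, hY⟩ := (Set.finite_range fun i => |y i|).bddAbove
  have hY' : ∀ i, |y i| ≤ Y := fun i => hY ⟨i, rfl⟩
  -- the outer maximum only serves to make the radius positive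
  set M : ℝ := max 1 (C + (Y + C)) with hM
  have hMpos : 0 < M := lt_of_lt_of_le one_pos (le_max_left _ _)
  -- the midpoint of `1 - (1 - κ)²` and `ε₂`
  obtain ⟨K, -, hK⟩ := hUABP ((1 - (1 - κ) ^ 2 + ε₂) / 2) (by nlinarith) (by linarith) M hMpos
  refine ⟨K, ?_⟩
  rintro xstar ystar ⟨S, hScard, hS⟩ ⟨S', hS'card, hS'⟩
  set β := βtilde (fun i' => (xstar i'.1, ystar i'.1)) with hβdef
  have hβ : ‖β‖ ≤ Kβ := by
    refine hKβ _ ⟨S'.subtype (· ∈ A), ?_, fun i hi => ?_⟩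
    · rw [Finset.card_subtype]
      exact (Finset.card_filter_le _ _).trans hS'card
    · exact hS' i.1 i.2 (by simpa using hi)
  have hgood : ∀ j, j ∉ S → ∀ i ∈ A, i ∉ S' →
      g (xstar j) β + (ystar i - g (xstar i) β) ∈ {u : ℝ | |u| ≤ M} := by
    intro j hj i hi hi'
    have hxj : xstar j = x j := by
      by_cases hjA : j ∈ A
      · exact congrArg Prod.fst ((hS j hj).1 hjA)
      · exact (hS j hj).2 hjA
    obtain ⟨hxi, hyi⟩ := Prod.mk.inj (hS' i hi hi')
    rw [hxj, hxi, hyi, Set.mem_ofPred_eq]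
    refine le_trans ?_ (le_max_right _ _)
    exact (abs_add_le _ _).trans (add_le_add (hC j β hβ)
      ((abs_sub _ _).trans (add_le_add (hY' i) (hC i β hβ))))
  have hmass := le_mass_doubleEmpirical hn hmpos A hm
    (fun j i => g (xstar j) β + (ystar i - g (xstar i) β))
    (measurableSet_le (continuous_abs (G := ℝ)).measurable measurable_const)
    hsm S S' hScard hS'card hgood
  have hge : (1 - κ) ^ 2 ≤ (1 - (t : ℝ) / n) * (1 - (s : ℝ) / m) := by
    rw [sq]
    exact mul_le_mul (by linarith) (by linarith) (by linarith) (by linarith)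
  refine (hK _ (isProbabilityMeasure_doubleEmpirical hn hmpos A hm _)
    (lt_of_lt_of_le ?_ (hge.trans hmass))).le
  linarith
end

section
/- Let ρ_0^L be a bounded ρ-function, δ ∈ (0,1), and S_L the associated dispersion functional. Given M and γ > 0, there exists M* such that for every univariate distribution F with P_F(|y| ≤ M) ≥ 1 − δ + γ, one has S_L(F) ≤ M*. (Lemma BDP1.) -/
/-!
The infimum over centres is at most the M-scale centred at `0`, since every M-scale is nonnegative.
The M-scale centred at `0` is bounded because every solution `s` of `E ρ₀(y / s) = δ` is: by
continuity `ρ₀ ≤ γ / 2` near `0`, so once `s` is large compared with `M` the mass on `|y| ≤ M`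
contributes at most `γ / 2` to the expectation, while the remaining mass, at most `δ - γ`,
contributes at most `δ - γ` because `ρ₀ ≤ 1`. The expectation is then at most `δ - γ / 2 < δ`.
-/

open MeasureTheory Filter
open scoped ENNReal Topology

/-- A bounded ρ-function: continuous, nondecreasing in `|t|`, `ρ 0 = 0`, `ρ(∞) = 1`
(so `ρ ≤ 1`), and `ρ v < 1` implies `ρ u < ρ v` for `|u| < |v|`. -/
def IsBoundedRhoFun (ρ : ℝ → ℝ) : Prop :=
  Continuous ρ ∧ ρ 0 = 0 ∧ (∀ u v : ℝ, |u| ≤ |v| → ρ u ≤ ρ v) ∧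
  Filter.Tendsto ρ Filter.atTop (nhds 1) ∧ (∀ u, ρ u ≤ 1) ∧
  (∀ u v : ℝ, |u| < |v| → ρ v < 1 → ρ u < ρ v)

/-- `S_L*(F, μ)`: the M-scale of `F` centred at `μ`, i.e. the solution `s` of
`E_F ρ₀((y − μ)/s) = δ` (via an infimum, which handles the degenerate cases). -/
noncomputable def SLstar (ρ₀ : ℝ → ℝ) (δ : ℝ) (F : MeasureTheory.Measure ℝ) (μ : ℝ) : ℝ :=
  sInf {s : ℝ | 0 < s ∧ ∫ t, ρ₀ ((t - μ) / s) ∂F = δ}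

/-- The dispersion functional `S_L(F) = min_μ S_L*(F, μ)`. -/
noncomputable def SL (ρ₀ : ℝ → ℝ) (δ : ℝ) (F : MeasureTheory.Measure ℝ) : ℝ :=
  ⨅ μ : ℝ, SLstar ρ₀ δ F μ

lemma SLstar_nonneg (ρ₀ : ℝ → ℝ) (δ : ℝ) (F : Measure ℝ) (μ : ℝ) : 0 ≤ SLstar ρ₀ δ F μ :=
  Real.sInf_nonneg fun _ hs => hs.1.le

lemma SL_le_SLstar (ρ₀ : ℝ → ℝ) (δ : ℝ) (F : Measure ℝ) (μ : ℝ) :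
    SL ρ₀ δ F ≤ SLstar ρ₀ δ F μ :=
  ciInf_le ⟨0, by rintro _ ⟨ν, rfl⟩; exact SLstar_nonneg ρ₀ δ F ν⟩ μ

/-- If `f ≤ 1` everywhere and `f ≤ c` on `A`, then `E f ≤ c + P(Aᶜ)`. -/
lemma integral_le_add_compl (F : Measure ℝ) [IsProbabilityMeasure F] {f : ℝ → ℝ} {c : ℝ}
    {A : Set ℝ} (hA : MeasurableSet A) (hf : Integrable f F) (hc : 0 ≤ c)
    (h1 : ∀ t, f t ≤ 1) (hcA : ∀ t ∈ A, f t ≤ c) :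
    ∫ t, f t ∂F ≤ c + (1 - F.real A) := by
  have hi : Integrable (Aᶜ.indicator (fun _ => (1 : ℝ))) F :=
    (integrable_const 1).indicator hA.compl
  calc ∫ t, f t ∂F ≤ ∫ t, (c + Aᶜ.indicator (fun _ => (1 : ℝ)) t) ∂F := by
        refine integral_mono hf ((integrable_const c).add hi) fun t => ?_
        by_cases ht : t ∈ A
        · simpa [ht] using hcA t ht
        · simpa [ht] using (h1 t).trans (by linarith)
    _ = c + (1 - F.real A) := by
        rw [integral_add (integrable_const c) hi, integral_indicator_const _ hA.compl,
          probReal_compl_eq_one_sub hA]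
        simp

/-- **Lemma BDP1.** Let `ρ₀` be a bounded ρ-function and `δ ∈ (0,1)`.  Given `M` and
`γ > 0` there exists `M*` such that every distribution `F` with
`P_F(|y| ≤ M) ≥ 1 − δ + γ` satisfies `S_L(F) ≤ M*`. -/
theorem bdp1
    (ρ₀ : ℝ → ℝ) (hρ₀ : IsBoundedRhoFun ρ₀)
    (δ : ℝ) (hδ : δ ∈ Set.Ioo (0 : ℝ) 1) :
    ∀ (M γ : ℝ), 0 < γ →
      ∃ Mstar : ℝ, ∀ F : Measure ℝ, IsProbabilityMeasure F →
        1 - δ + γ ≤ (F {t : ℝ | |t| ≤ M}).toReal → SL ρ₀ δ F ≤ Mstar := by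
  intro M γ hγ
  obtain ⟨hcont, h0, hmono, -, hle1, -⟩ := hρ₀
  obtain ⟨η, hη, hsmall⟩ := Metric.continuousAt_iff.1 (hcont.continuousAt (x := 0)) (γ / 2) (half_pos hγ)
  simp only [Real.dist_eq, h0, sub_zero] at hsmall
  have hnn : ∀ u, 0 ≤ ρ₀ u := fun u => h0 ▸ hmono 0 u (by simp)
  have hMη : 0 ≤ |M| / η := by positivity
  refine ⟨|M| / η, fun F hF hP => (SL_le_SLstar ρ₀ δ F 0).trans ?_⟩
  have hbound : ∀ s ∈ {s : ℝ | 0 < s ∧ ∫ t, ρ₀ ((t - 0) / s) ∂F = δ}, s ≤ |M| / η := by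
    rintro s ⟨hs, hEs⟩
    by_contra! hlt
    have hMs : |M| < η * s := by rwa [div_lt_iff₀' hη] at hlt
    have hint : Integrable (fun t => ρ₀ ((t - 0) / s)) F :=
      Integrable.of_bound (C := 1)
        (by fun_prop : Continuous fun t => ρ₀ ((t - 0) / s)).aestronglyMeasurable
        (ae_of_all _ fun t => by rw [Real.norm_of_nonneg (hnn _)]; exact hle1 _)
    have hA : MeasurableSet {t : ℝ | |t| ≤ M} :=
      measurableSet_le continuous_abs.measurable measurable_const
    have key := integral_le_add_compl F hA hint (half_pos hγ).le (fun t => hle1 _) (by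
      intro t ht
      have ht' : |(t - 0) / s| < η := by
        rw [sub_zero, abs_div, abs_of_pos hs, div_lt_iff₀ hs]
        exact (ht.trans (le_abs_self M)).trans_lt hMs
      exact (le_abs_self _).trans (hsmall ht').le)
    rw [hEs, measureReal_def] at key
    linarith
  -- With no solution `s`, the infimum takes the junk value `0`, which obeys the bound too.
  rcases Set.eq_empty_or_nonempty {s : ℝ | 0 < s ∧ ∫ t, ρ₀ ((t - 0) / s) ∂F = δ} with he | ⟨s, hs⟩
  · rw [SLstar, he, Real.sInf_empty]
    exact hMη
  · exact (csInf_le ⟨0, fun _ h => h.1.le⟩ hs).trans (hbound s hs)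
end
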